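/- For every m = 2^k with k ≥ 1, the words w_i^(m) for 1 ≤ i ≤ (3/2)m are pairwise distinct. -/

import Mathlib

/-!
The sequence vanishes at odd positions and satisfies `pd (2 * n) = 1 - pd n` for `n ≥ 1`.
Two positions whose words of length `2 ^ (k + 2)` agree have the same parity: otherwise one of
the words would vanish at all its even positions, so `pd` would be `1` at two consecutive
positions, one of which is odd. When the parities agree, reading both words at the even
positions only and halving gives two equal words of length `2 ^ (k + 1)` at positions
satisfying the halved bound, so induction on `k` applies (`eq_of_agree`).
-/

open Filter Topology

/-- The period-doubling sequence (1-based): `pd i = k_i mod 2` where `k_i` is the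
largest `k` such that `2^k` divides `i`. -/
def pd (i : ℕ) : ℕ := padicValNat 2 i % 2

/-- The `m`-word `w_i^(m) = ω_i ω_{i+1} ⋯ ω_{i+m-1}` of the period-doubling sequence. -/
def wordAt (i m : ℕ) : List ℕ := (List.range m).map (fun h => pd (i + h))

/-- An `m`-word is allowed if it occurs in the period-doubling sequence. -/
def Allowed (m : ℕ) (v : List ℕ) : Prop := ∃ i, 1 ≤ i ∧ wordAt i m = v

/-- The complexity function of the period-doubling sequence. -/
noncomputable def pdComplexity (m : ℕ) : ℕ := Set.ncard {v | Allowed m v}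

/-- `HasFreq m v c`: the frequency of the `m`-word `v` in the period-doubling
sequence exists and equals `c`. -/
def HasFreq (m : ℕ) (v : List ℕ) (c : ℝ) : Prop :=
  Tendsto (fun n : ℕ => (((Finset.Icc 1 n).filter (fun i => wordAt i m = v)).card : ℝ) / n)
    atTop (𝓝 c)

open Classical in
/-- The correlation sum `C(ω, n, m)` of the period-doubling sequence, for a distance
threshold `ε` with `2^{-m} ≤ ε < 2^{-m+1}`. -/
noncomputable def corrSum (n m : ℕ) : ℝ :=
  (((Finset.range n ×ˢ Finset.range n).filter
      (fun p : ℕ × ℕ => ∀ h ∈ Finset.Icc 1 m, pd (p.1 + h) = pd (p.2 + h))).card : ℝ) / (n : ℝ) ^ 2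

/-- The period-doubling substitution `ζ(0) = 01`, `ζ(1) = 00`, extended to a morphism
on finite words. -/
def substWord (w : List ℕ) : List ℕ := (w.map (fun a => if a = 0 then [0, 1] else [0, 0])).flatten

/-- The period-doubling substitution acting on one-sided infinite sequences
(0-based indexing). -/
def substSeq (x : ℕ → ℕ) : ℕ → ℕ := fun n =>
  if n % 2 = 0 then 0 else if x (n / 2) = 0 then 1 else 0

theorem pd_odd (n : ℕ) : pd (2 * n + 1) = 0 := by
  unfold pd
  rw [padicValNat.eq_zero_of_not_dvd (by omega)]

theorem pd_double (n : ℕ) (hn : 1 ≤ n) : pd (2 * n) = 1 - pd n := by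
  unfold pd
  rw [padicValNat.mul (by norm_num) (by omega), padicValNat.self (by norm_num)]
  omega

theorem pd_le_one (n : ℕ) : pd n ≤ 1 := by
  unfold pd
  omega

theorem pd_eq_of_double {a b : ℕ} (ha : 1 ≤ a) (hb : 1 ≤ b) (h : pd (2 * a) = pd (2 * b)) :
    pd a = pd b := by
  rw [pd_double a ha, pd_double b hb] at h
  have := pd_le_one a
  have := pd_le_one b
  omega

/-- An even and an odd position never start words that agree on the offsets `0` and `2`. -/
theorem not_agree_even_odd {a b : ℕ} (ha : 1 ≤ a)
    (h0 : pd (2 * a) = pd (2 * b + 1)) (h2 : pd (2 * a + 2) = pd (2 * b + 1 + 2)) : False := by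
  rw [pd_odd, pd_double a ha] at h0
  rw [show 2 * a + 2 = 2 * (a + 1) by ring, show 2 * b + 1 + 2 = 2 * (b + 1) + 1 by ring,
    pd_odd, pd_double (a + 1) (by omega)] at h2
  -- One of `a`, `a + 1` is odd, so `pd` vanishes there.
  obtain ⟨c, rfl | rfl⟩ := Nat.even_or_odd' a
  · rw [pd_odd] at h2
    omega
  · rw [pd_odd] at h0
    omega

/-- The theorem for `m = 2 ^ (k + 1)`, where `3 * m / 2 = 3 * 2 ^ k`, in terms of offsets. -/
theorem eq_of_agree (k : ℕ) : ∀ i j, 1 ≤ i → 1 ≤ j → i ≤ 3 * 2 ^ k → j ≤ 3 * 2 ^ k →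
    (∀ h < 2 ^ (k + 1), pd (i + h) = pd (j + h)) → i = j := by
  induction k with
  | zero =>
    intro i j hi hj hi3 hj3 H
    have h0 := H 0 (by norm_num)
    have h1 := H 1 (by norm_num)
    have p1 : pd 1 = 0 := pd_odd 0
    have p2 : pd 2 = 1 := by rw [show 2 = 2 * 1 by rfl, pd_double 1 le_rfl, p1]
    have p3 : pd 3 = 0 := pd_odd 1
    have p4 : pd 4 = 0 := by rw [show 4 = 2 * 2 by rfl, pd_double 2 (by norm_num), p2]
    norm_num at hi3 hj3
    interval_cases i <;> interval_cases j <;> simp_all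
  | succ k ih =>
    intro i j hi hj hi3 hj3 H
    have hpos : 0 < 2 ^ k := by positivity
    have e1 : 2 ^ (k + 1) = 2 * 2 ^ k := by ring
    have e2 : 2 ^ (k + 1 + 1) = 4 * 2 ^ k := by ring
    rw [e1] at hi3 hj3
    rw [e2] at H
    have h0 := H 0 (by omega)
    have h2 := H 2 (by omega)
    obtain ⟨a, rfl | rfl⟩ := Nat.even_or_odd' i <;> obtain ⟨b, rfl | rfl⟩ := Nat.even_or_odd' j
    · have := ih a b (by omega) (by omega) (by omega) (by omega) (fun h hh => by
        apply pd_eq_of_double (by omega) (by omega)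
        have := H (2 * h) (by omega)
        rwa [← mul_add, ← mul_add] at this)
      omega
    · exact (not_agree_even_odd (by omega) h0 h2).elim
    · exact (not_agree_even_odd (by omega) h0.symm h2.symm).elim
    · -- From the odd position `2 * a + 1`, the first even position is `2 * (a + 1)`.
      have := ih (a + 1) (b + 1) (by omega) (by omega) (by omega) (by omega) (fun h hh => by
        apply pd_eq_of_double (by omega) (by omega)
        have := H (2 * h + 1) (by omega)
        rwa [show 2 * a + 1 + (2 * h + 1) = 2 * (a + 1 + h) by ring,
          show 2 * b + 1 + (2 * h + 1) = 2 * (b + 1 + h) by ring] at this)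
      omega

theorem pd_words_pairwise_distinct (k m : ℕ) (hk : 1 ≤ k) (hm : m = 2 ^ k) :
    ∀ i j, 1 ≤ i → 1 ≤ j → i ≤ 3 * m / 2 → j ≤ 3 * m / 2 →
      wordAt i m = wordAt j m → i = j := by
  intro i j hi hj hi3 hj3 H
  obtain ⟨k, rfl⟩ := Nat.exists_eq_add_of_le' hk
  subst hm
  have e1 : 2 ^ (k + 1) = 2 * 2 ^ k := by ring
  refine eq_of_agree k i j hi hj (by omega) (by omega) (fun h hh => ?_)
  exact List.map_inj_left.mp H h (List.mem_range.mpr hh)
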